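/- If T is L-Lipschitz and monotone on a real Hilbert space H, z, w ∈ H, Δ > 0, and 0 < ρ ≤ 1/(L + Δ), then with x = z - ρ(Tz - w) and y = Tx we have ⟨z - x, y - w⟩ ≥ Δ‖z - x‖². -/

import Mathlib

open RealInnerProductSpace

theorem forward_step_delta_bound {H : Type*} [NormedAddCommGroup H] [InnerProductSpace ℝ H]
    [CompleteSpace H] (T : H → H) (L : ℝ) (hL : 0 ≤ L)
    (hLip : ∀ a b : H, ‖T a - T b‖ ≤ L * ‖a - b‖)
    (hMono : ∀ a b : H, 0 ≤ ⟪a - b, T a - T b⟫)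
    (z w : H) (Δ ρ : ℝ) (hΔ : 0 < Δ) (hρ : 0 < ρ) (hρle : ρ ≤ 1 / (L + Δ))
    (x y : H) (hx : x = z - ρ • (T z - w)) (hy : y = T x) :
    ⟪z - x, y - w⟫ ≥ Δ * ‖z - x‖ ^ 2 := by
  have hd : z - x = ρ • (T z - w) := by rw [hx]; abel
  have hg : T z - w = ρ⁻¹ • (z - x) := by
    rw [hd, smul_smul, inv_mul_cancel₀ hρ.ne', one_smul]
  have hpos : 0 < L + Δ := by linarith
  have hinv : L + Δ ≤ ρ⁻¹ := by
    rw [one_div] at hρle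
    exact (le_inv_comm₀ hρ hpos).mp hρle
  have e : y - w = ρ⁻¹ • (z - x) - (T z - T x) := by rw [← hg, hy]; abel
  have h1 : ⟪z - x, T z - T x⟫ ≤ ‖z - x‖ * ‖T z - T x‖ := real_inner_le_norm _ _
  have h2 := mul_le_mul_of_nonneg_left (hLip z x) (norm_nonneg (z - x))
  have h3 := mul_le_mul_of_nonneg_right hinv (sq_nonneg ‖z - x‖)
  rw [e, inner_sub_right, real_inner_smul_right, real_inner_self_eq_norm_sq]
  nlinarith
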